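/- arXiv:1008.5029 — 2 statements merged into one kernel-verified Lean document; each statement's English description precedes it below -/
import Mathlib

section
/- Hall-interval structure of all-different solutions: let V be a finite set of variables, dom(v) a nonempty finite set of integers for each v ∈ V, and f : V → ℤ an injective function with f(v) ∈ dom(v) for all v ∈ V. Let l ≤ u be integers such that [l,u] is a Hall interval, i.e., the set H = {v ∈ V : dom(v) ⊆ [l,u]} satisfies |H| = u − l + 1. Then f restricted to H is a bijection from H onto the set of integers in [l,u], and f(v) ∉ [l,u] for every v ∈ V \ H. -/
/-- **Hall-interval structure of all-different solutions.**
`V` is a finite set of variables, `dom v` a nonempty finite set of integers for each `v`,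
and `f` an injective assignment with `f v ∈ dom v`.  If `[l,u]` is a Hall interval, i.e.
the set `H = {v | dom v ⊆ [l,u]}` has exactly `u - l + 1` elements, then `f` restricted to
`H` is a bijection from `H` onto the integers in `[l,u]`, and `f v ∉ [l,u]` for `v ∉ H`. -/
theorem hall_interval_structure {V : Type} [Fintype V]
    (dom : V → Finset ℤ) (hne : ∀ v, (dom v).Nonempty)
    (f : V → ℤ) (hinj : Function.Injective f) (hmem : ∀ v, f v ∈ dom v)
    (l u : ℤ) (hlu : l ≤ u)
    (hHall : (({v : V | (dom v : Set ℤ) ⊆ Set.Icc l u}).ncard : ℤ) = u - l + 1) :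
    Set.BijOn f {v : V | (dom v : Set ℤ) ⊆ Set.Icc l u} (Set.Icc l u) ∧
      ∀ v : V, ¬ (dom v : Set ℤ) ⊆ Set.Icc l u → f v ∉ Set.Icc l u := by
  have hmaps : Set.MapsTo f {v : V | (dom v : Set ℤ) ⊆ Set.Icc l u} (Set.Icc l u) :=
    fun v hv => hv (hmem v)
  have hcard : ((Set.Icc l u).ncard : ℤ) = u - l + 1 := by
    rw [← Finset.coe_Icc, Set.ncard_coe_finset, Int.card_Icc]
    omega
  have himg : f '' {v : V | (dom v : Set ℤ) ⊆ Set.Icc l u} = Set.Icc l u := by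
    apply Set.eq_of_subset_of_ncard_le hmaps.image_subset _ (Set.finite_Icc l u)
    rw [Set.ncard_image_of_injective _ hinj]
    omega
  refine ⟨⟨hmaps, hinj.injOn, himg.ge⟩, fun v hv hfv => ?_⟩
  rw [← himg] at hfv
  obtain ⟨w, hw, hwv⟩ := hfv
  exact hv (hinj hwv ▸ hw)
end

section
/- Correctness of the counting-ladder translation of cardinality constraints: let a_1,…,a_n be Booleans and k ≥ 1, and define l(i,j) for 1 ≤ i ≤ n+1 and 0 ≤ j ≤ k by l(i,0) = true for all i, l(n+1,j) = false for all j ≥ 1, and l(i,j) = l(i+1,j) ∨ (a_i ∧ l(i+1,j−1)) for 1 ≤ i ≤ n and 1 ≤ j ≤ k. Then for all 1 ≤ i ≤ n+1 and 0 ≤ j ≤ k, l(i,j) is true if and only if at least j of the Booleans a_i, a_{i+1}, …, a_n are true; in particular, l(1,k) is true if and only if |{m : 1 ≤ m ≤ n, a_m = true}| ≥ k. -/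
/-- **Correctness of the counting-ladder translation of cardinality constraints.**
Given Booleans `a 1, …, a n` and `k ≥ 1`, let `l i j` (for `1 ≤ i ≤ n+1`, `0 ≤ j ≤ k`) satisfy
`l i 0 = true`, `l (n+1) j = false` for `j ≥ 1`, and
`l i j = l (i+1) j ∨ (a i ∧ l (i+1) (j-1))`.  Then `l i j` is true iff at least `j` of the
Booleans `a i, …, a n` are true; in particular `l 1 k` is true iff at least `k` of
`a 1, …, a n` are true. -/
theorem counting_ladder_correct (n k : ℕ) (hk : 1 ≤ k) (a : ℕ → Bool) (l : ℕ → ℕ → Bool)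
    (h0 : ∀ i, 1 ≤ i → i ≤ n + 1 → l i 0 = true)
    (htop : ∀ j, 1 ≤ j → j ≤ k → l (n + 1) j = false)
    (hrec : ∀ i j, 1 ≤ i → i ≤ n → 1 ≤ j → j ≤ k →
      l i j = (l (i + 1) j || (a i && l (i + 1) (j - 1)))) :
    (∀ i j, 1 ≤ i → i ≤ n + 1 → j ≤ k →
      (l i j = true ↔ j ≤ ((Finset.Icc i n).filter (fun m => a m = true)).card)) ∧
    (l 1 k = true ↔ k ≤ ((Finset.Icc 1 n).filter (fun m => a m = true)).card) := by
  have key : ∀ d i j, i + d = n + 1 → 1 ≤ i → j ≤ k →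
      (l i j = true ↔ j ≤ ((Finset.Icc i n).filter (fun m => a m = true)).card) := by
    intro d
    induction d with
    | zero =>
      intro i j hi h1 hj
      have hi' : i = n + 1 := by omega
      subst hi'
      rcases Nat.eq_zero_or_pos j with rfl | hp
      · simp [h0 (n + 1) h1 le_rfl]
      · simp [htop j hp hj]
        omega
    | succ d ih =>
      intro i j hi h1 hj
      rcases Nat.eq_zero_or_pos j with rfl | hp
      · simp [h0 i h1 (by omega)]
      · have hI : Finset.Icc i n = insert i (Finset.Icc (i + 1) n) := by
          ext x
          simp only [Finset.mem_Icc, Finset.mem_insert]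
          omega
        have e1 := ih (i + 1) j (by omega) (by omega) hj
        have e2 := ih (i + 1) (j - 1) (by omega) (by omega) (by omega)
        rw [hrec i j h1 (by omega) hp hj, hI, Finset.filter_insert, Bool.or_eq_true,
          Bool.and_eq_true, e1, e2]
        by_cases ha : a i = true
        · rw [if_pos ha, Finset.card_insert_of_notMem (by simp)]
          simp only [ha, true_and]
          omega
        · simp [ha]
  have main : ∀ i j, 1 ≤ i → i ≤ n + 1 → j ≤ k →
      (l i j = true ↔ j ≤ ((Finset.Icc i n).filter (fun m => a m = true)).card) :=
    fun i j h1 h2 hj => key (n + 1 - i) i j (by omega) h1 hj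
  exact ⟨main, main 1 k le_rfl (by omega) le_rfl⟩
end
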